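/- arXiv:1307.8321 — 2 statements merged into one kernel-verified Lean document; each statement's English description precedes it below -/
import Mathlib

section
/- Let n ≥ 2, m ≥ 2, let f : 𝔻^n → 𝔹_m be a holomorphic mapping, and let p = (p_1,…,p_n) ∈ 𝔻^n be a point with f(p) = 0 at which equality holds in the inequality ∑_{j=1}^n (1 − |p_j|²)² |f'_{z_j}(p)|² ≤ 1. Then f is given explicitly for all z = (z_1,…,z_n) ∈ 𝔻^n by f(z) = ∑_{j=1}^n f'_{z_j}(p) · (−1 + |p_j|²) · (p_j − z_j)/(1 − \overline{p_j} z_j). -/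
/-!
The disc automorphisms `w ↦ (w + p_j) / (1 + conj p_j * w)` move `p` to the origin: the map
`g w = f (φ w)` sends the polydisk to the ball, `g 0 = 0`, and `∂_j g 0 = (1 - |p_j|²) ∂_j f p`, so
that `∑ |∂_j g 0|² = 1`. It suffices to show that `g` is its own derivative `A` at `0`.

For `ζ` on the torus `|ζ_j| = 1` the Schwarz lemma for `t ↦ g (t ζ)` gives `|A ζ| ≤ 1`. The mean of
`|∑ ε_j ζ_j ∂_j g 0|²` over all signs `ε` is `∑ |∂_j g 0|² = 1` by the parallelogram law, and
every term is at most `1`; hence `|A ζ| = 1` (`signs_extremal`). This is the equality case of the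
Schwarz lemma, and the ball is strictly convex, so `g (t ζ) = t A ζ`. Thus `g = A` on every torus
`|w_j| = r < 1`, and the maximum principle, applied in one variable at a time, extends this to
the polydisk (`eq_of_eq_torus`).
-/

/-- If all signed sums `x + ∑ ± v j` have squared norm at most `c`, then the mean of these
squares, `‖x‖² + ∑ ‖v j‖²`, is at most `c`; if that mean equals `c`, then the sum with all signs positive attains `c`.
The free summand `x` makes the induction on `S` work. -/
lemma signs_extremal {ι E : Type*} [NormedAddCommGroup E] [InnerProductSpace ℂ E] [DecidableEq ι]
    (v : ι → E) (c : ℝ) (S : Finset ι) : ∀ x : E,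
    (∀ ε : ι → ℂ, (∀ j, ε j = 1 ∨ ε j = -1) → ‖x + ∑ j ∈ S, ε j • v j‖ ^ 2 ≤ c) →
    ‖x‖ ^ 2 + ∑ j ∈ S, ‖v j‖ ^ 2 ≤ c ∧
      (c ≤ ‖x‖ ^ 2 + ∑ j ∈ S, ‖v j‖ ^ 2 → c ≤ ‖x + ∑ j ∈ S, v j‖ ^ 2) := by
  induction S using Finset.induction_on with
  | empty =>
    intro x h
    simpa using h (fun _ => 1) (fun _ => Or.inl rfl)
  | insert a S ha ih =>
    intro x h
    have key : ∀ s : ℂ, (s = 1 ∨ s = -1) → ∀ ε : ι → ℂ, (∀ j, ε j = 1 ∨ ε j = -1) →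
        ‖x + s • v a + ∑ j ∈ S, ε j • v j‖ ^ 2 ≤ c := by
      intro s hs ε hε
      have h1 := h (Function.update ε a s) (fun j => by
        by_cases hj : j = a
        · subst hj; simpa using hs
        · simpa [hj] using hε j)
      rw [Finset.sum_insert ha, Function.update_self, ← add_assoc] at h1
      rwa [Finset.sum_congr rfl (g := fun j => ε j • v j)] at h1
      intro j hj
      have hja : j ≠ a := fun h => ha (h ▸ hj)
      rw [Function.update_of_ne hja]
    obtain ⟨h1, h1'⟩ := ih _ (key 1 (Or.inl rfl))
    obtain ⟨h2, -⟩ := ih _ (key (-1) (Or.inr rfl))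
    have h3 := parallelogram_law_with_norm ℂ x (v a)
    rw [Finset.sum_insert ha, Finset.sum_insert ha]
    simp only [one_smul, neg_smul, ← sub_eq_add_neg] at h1 h2 h1'
    rw [← add_assoc x]
    exact ⟨by nlinarith, fun hc => h1' (by nlinarith)⟩

/-- Two holomorphic maps on the polydisk that agree on the torus `|w_j| = r`, `r < 1`, agree on
the polydisk of radius `r`. For the induction, only the variables in `S` lie inside the disc of
radius `r`, and the others on its boundary; `S = univ` is the case of interest. -/
lemma eq_of_eq_torus {ι E : Type*} [Fintype ι] [DecidableEq ι] [NormedAddCommGroup E]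
    [NormedSpace ℂ E] {g h : (ι → ℂ) → E}
    (hg : DifferentiableOn ℂ g {w | ∀ j, ‖w j‖ < 1})
    (hh : DifferentiableOn ℂ h {w | ∀ j, ‖w j‖ < 1}) {r : ℝ} (hr0 : 0 < r) (hr : r < 1)
    (heq : ∀ w : ι → ℂ, (∀ j, ‖w j‖ = r) → g w = h w) (S : Finset ι) :
    ∀ w : ι → ℂ, (∀ j ∈ S, ‖w j‖ < r) → (∀ j ∉ S, ‖w j‖ = r) → g w = h w := by
  induction S using Finset.induction_on with
  | empty => exact fun w _ hw => heq w fun j => hw j (by simp)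
  | insert a S ha ih =>
    intro w hw1 hw2
    have hmaps : Set.MapsTo (fun t : ℂ => Function.update w a t) (Metric.ball 0 1)
        {w | ∀ j, ‖w j‖ < 1} := by
      intro t ht j
      by_cases hj : j = a
      · subst hj; simpa using ht
      · change ‖Function.update w a t j‖ < 1
        rw [Function.update_of_ne hj]
        by_cases hjS : j ∈ S
        · exact (hw1 j (by simp [hjS])).trans hr
        · exact (hw2 j (by simp [hjS, hj])).trans_lt hr
    have hupd : DifferentiableOn ℂ (fun t : ℂ => Function.update w a t) (Metric.ball 0 1) :=
      fun t _ => (hasFDerivAt_update w t).differentiableAt.differentiableWithinAt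
    have hsub : closure (Metric.ball (0 : ℂ) r) ⊆ Metric.ball 0 1 := by
      rw [closure_ball _ hr0.ne']
      exact Metric.closedBall_subset_ball hr
    have hfr : Set.EqOn (fun t => g (Function.update w a t)) (fun t => h (Function.update w a t))
        (frontier (Metric.ball 0 r)) := by
      intro t ht
      rw [frontier_ball _ hr0.ne'] at ht
      refine ih _ (fun j hj => ?_) fun j hj => ?_
      · have hja : j ≠ a := fun h => ha (h ▸ hj)
        rw [Function.update_of_ne hja]
        exact hw1 j (by simp [hj])
      · by_cases hja : j = a
        · subst hja; simpa using ht
        · rw [Function.update_of_ne hja]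
          exact hw2 j (by simp [hj, hja])
    have := Complex.eqOn_of_eqOn_frontier Metric.isBounded_ball
      ((hg.comp hupd hmaps).mono hsub).diffContOnCl
      ((hh.comp hupd hmaps).mono hsub).diffContOnCl hfr
      (show w a ∈ Metric.ball 0 r by simpa using hw1 a (by simp))
    simpa using this

/-- The case `p = 0`: a map into the unit ball that attains equality at the origin is linear. -/
lemma eq_fderiv_zero {ι E : Type*} [Fintype ι] [DecidableEq ι] [NormedAddCommGroup E]
    [InnerProductSpace ℂ E] {g : (ι → ℂ) → E}
    (hg : DifferentiableOn ℂ g {w | ∀ j, ‖w j‖ < 1})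
    (hgb : ∀ w : ι → ℂ, (∀ j, ‖w j‖ < 1) → ‖g w‖ < 1) (hg0 : g 0 = 0)
    (heq : ∑ j, ‖fderiv ℂ g 0 (Pi.single j 1)‖ ^ 2 = 1) :
    ∀ w : ι → ℂ, (∀ j, ‖w j‖ < 1) → g w = fderiv ℂ g 0 w := by
  have hopen : IsOpen {w : ι → ℂ | ∀ j, ‖w j‖ < 1} := by
    simp only [Set.ofPred_forall]
    exact isOpen_iInter_of_finite fun j => isOpen_lt (by fun_prop) (by fun_prop)
  have hg0d : HasFDerivAt g (fderiv ℂ g 0) 0 :=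
    (hg.differentiableAt (hopen.mem_nhds (by simp))).hasFDerivAt
  set A := fderiv ℂ g 0 with hA
  have hAsum : ∀ w : ι → ℂ, A w = ∑ j, w j • A (Pi.single j 1) := by
    intro w
    conv_lhs => rw [pi_eq_sum_univ' w]
    rw [map_sum]
    refine Finset.sum_congr rfl fun j _ => ?_
    rw [map_smul]
  have hline : ∀ ζ : ι → ℂ, (∀ j, ‖ζ j‖ = 1) →
      DifferentiableOn ℂ (fun t : ℂ => g (t • ζ)) (Metric.ball 0 1) ∧
      Set.MapsTo (fun t : ℂ => g (t • ζ)) (Metric.ball 0 1)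
        (Metric.closedBall (g ((0 : ℂ) • ζ)) 1) ∧
      deriv (fun t : ℂ => g (t • ζ)) 0 = A ζ := by
    intro ζ hζ
    have hm : Set.MapsTo (fun t : ℂ => t • ζ) (Metric.ball 0 1) {w | ∀ j, ‖w j‖ < 1} := by
      intro t ht j
      simpa [hζ j] using ht
    refine ⟨hg.comp (by fun_prop) hm, fun t ht => ?_, ?_⟩
    · simpa [hg0] using (hgb _ (hm ht)).le
    · have h1 : HasDerivAt (fun t : ℂ => t • ζ) ζ 0 := by
        simpa using (hasDerivAt_id (0 : ℂ)).smul_const ζ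
      refine (HasFDerivAt.comp_hasDerivAt (0 : ℂ) ?_ h1).deriv
      simpa using hg0d
  have hle : ∀ ζ : ι → ℂ, (∀ j, ‖ζ j‖ = 1) → ‖A ζ‖ ≤ 1 := by
    intro ζ hζ
    obtain ⟨h1, h2, h3⟩ := hline ζ hζ
    simpa [h3] using Complex.norm_deriv_le_div_of_mapsTo_ball h1 h2 one_pos
  have hone : ∀ ζ : ι → ℂ, (∀ j, ‖ζ j‖ = 1) → ‖A ζ‖ = 1 := by
    intro ζ hζ
    refine le_antisymm (hle ζ hζ) ?_
    have := (signs_extremal (fun j => ζ j • A (Pi.single j 1)) 1 Finset.univ 0 ?_).2 ?_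
    · rw [zero_add, ← hAsum] at this
      nlinarith [norm_nonneg (A ζ)]
    · intro ε hε
      have h1 := hle (fun j => ε j * ζ j) fun j => by
        rcases hε j with h | h <;> simp [h, hζ j]
      rw [hAsum] at h1
      simp only [mul_smul] at h1
      rw [zero_add]
      exact pow_le_one₀ (norm_nonneg _) h1
    · simp [norm_smul, hζ, heq]
  have htorus : ∀ r : ℝ, 0 < r → r < 1 → ∀ w : ι → ℂ, (∀ j, ‖w j‖ = r) → g w = A w := by
    intro r hr0 hr w hw
    have hr0' : (r : ℂ) ≠ 0 := by exact_mod_cast hr0.ne'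
    have hζ : ∀ j, ‖((r : ℂ)⁻¹ • w) j‖ = 1 := fun j => by
      simp [hw j, abs_of_pos hr0, hr0.ne']
    obtain ⟨h1, h2, h3⟩ := hline _ hζ
    have : StrictConvexSpace ℝ E := by
      let _ : InnerProductSpace ℝ E := InnerProductSpace.rclikeToReal ℂ E
      have : UniformConvexSpace E := InnerProductSpace.toUniformConvexSpace (F := E)
      infer_instance
    have h4 := Complex.affine_of_mapsTo_ball_of_norm_dslope_eq_div h1 h2
      (Metric.mem_ball_self one_pos) (by rw [dslope_same, h3, hone _ hζ]; simp)
      (show (r : ℂ) ∈ Metric.ball 0 1 by simpa [abs_of_pos hr0] using hr)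
    simp only [dslope_same, h3] at h4
    simpa [hg0, smul_smul, hr0'] using h4
  intro w hw
  obtain ⟨r, hr0, hr, hwr⟩ : ∃ r : ℝ, 0 < r ∧ r < 1 ∧ ∀ j, ‖w j‖ < r := by
    have h1 : ‖w‖ < 1 := (pi_norm_lt_iff one_pos).2 hw
    obtain ⟨r, h2, h3⟩ := exists_between h1
    exact ⟨r, (norm_nonneg w).trans_lt h2, h3, fun j => (norm_le_pi_norm w j).trans_lt h2⟩
  exact eq_of_eq_torus hg A.differentiable.differentiableOn hr0 hr (htorus r hr0 hr) Finset.univ w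
    (fun j _ => hwr j) (by simp)

lemma one_add_conj_mul_ne_zero {a w : ℂ} (ha : ‖a‖ < 1) (hw : ‖w‖ < 1) :
    1 + (starRingEnd ℂ) a * w ≠ 0 := by
  intro h
  have h1 : ‖(starRingEnd ℂ) a * w‖ = 1 := by
    rw [eq_neg_of_add_eq_zero_right h]; simp
  rw [norm_mul, RCLike.norm_conj] at h1
  nlinarith [norm_nonneg a, norm_nonneg w]

lemma norm_moebius_lt_one {a w : ℂ} (ha : ‖a‖ < 1) (hw : ‖w‖ < 1) :
    ‖(w + a) / (1 + (starRingEnd ℂ) a * w)‖ < 1 := by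
  have h0 := one_add_conj_mul_ne_zero ha hw
  rw [norm_div, div_lt_one (norm_pos_iff.2 h0), ← sq_lt_sq₀ (norm_nonneg _) (norm_nonneg _)]
  -- The difference of the two squares is `(1 - |a|²) (1 - |w|²)`.
  have ha' : ‖a‖ ^ 2 < 1 := by nlinarith [norm_nonneg a]
  have hw' : ‖w‖ ^ 2 < 1 := by nlinarith [norm_nonneg w]
  rw [← Complex.normSq_eq_norm_sq] at *
  rw [← Complex.normSq_eq_norm_sq] at *
  simp only [Complex.normSq_apply, Complex.add_re, Complex.add_im, Complex.mul_re, Complex.mul_im,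
    Complex.conj_re, Complex.conj_im, Complex.one_re, Complex.one_im] at *
  nlinarith [mul_pos (sub_pos.2 ha') (sub_pos.2 hw')]

lemma hasDerivAt_moebius (a : ℂ) :
    HasDerivAt (fun w : ℂ => (w + a) / (1 + (starRingEnd ℂ) a * w)) (1 - (‖a‖ : ℂ) ^ 2) 0 := by
  have h1 : HasDerivAt (fun w : ℂ => w + a) 1 0 := (hasDerivAt_id _).add_const a
  have h2 : HasDerivAt (fun w : ℂ => 1 + (starRingEnd ℂ) a * w) ((starRingEnd ℂ) a) 0 := by
    simpa using ((hasDerivAt_id (0 : ℂ)).const_mul ((starRingEnd ℂ) a)).const_add 1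
  refine (h1.div h2 (by simp)).congr_deriv ?_
  rw [← Complex.mul_conj']
  simp

/-- **Rigidity in the equality case of (1.9)** (Remark 2). If `n, m ≥ 2`,
`f : 𝔻ⁿ → 𝔹_m` is holomorphic, `f p = 0` and equality holds in
`∑ j (1 - |p_j|²)² |f'_{z_j}(p)|² ≤ 1`, then
`f z = ∑ j f'_{z_j}(p)·(-1 + |p_j|²)·(p_j - z_j)/(1 - conj p_j · z_j)` on `𝔻ⁿ`. -/
theorem equality_case_rigidity
    (n m : ℕ) (hn : 2 ≤ n) (hm : 2 ≤ m)
    (f : EuclideanSpace ℂ (Fin n) → EuclideanSpace ℂ (Fin m))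
    (hf : DifferentiableOn ℂ f {z : EuclideanSpace ℂ (Fin n) | ∀ j, ‖z j‖ < 1})
    (hfb : ∀ z : EuclideanSpace ℂ (Fin n), (∀ j, ‖z j‖ < 1) → ‖f z‖ < 1)
    (p : EuclideanSpace ℂ (Fin n)) (hp : ∀ j, ‖p j‖ < 1) (hfp : f p = 0)
    (heq : ∑ j : Fin n, (1 - ‖p j‖ ^ 2) ^ 2 *
        ‖fderiv ℂ f p (EuclideanSpace.single j 1)‖ ^ 2 = 1) :
    ∀ z : EuclideanSpace ℂ (Fin n), (∀ j, ‖z j‖ < 1) →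
      f z = ∑ j : Fin n,
        ((-1 + (‖p j‖ : ℂ) ^ 2) * ((p j - z j) / (1 - (starRingEnd ℂ) (p j) * z j))) •
          fderiv ℂ f p (EuclideanSpace.single j 1) := by
  have hopen : IsOpen {z : EuclideanSpace ℂ (Fin n) | ∀ j, ‖z j‖ < 1} := by
    simp only [Set.ofPred_forall]
    exact isOpen_iInter_of_finite fun j => isOpen_lt (by fun_prop) (by fun_prop)
  let φ₀ : (Fin n → ℂ) → (Fin n → ℂ) :=
    fun w j => (w j + p j) / (1 + (starRingEnd ℂ) (p j) * w j)
  let e := (EuclideanSpace.equiv (Fin n) ℂ).symm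
  let φ : (Fin n → ℂ) → EuclideanSpace ℂ (Fin n) := fun w => e (φ₀ w)
  have hφj : ∀ w j, φ w j = (w j + p j) / (1 + (starRingEnd ℂ) (p j) * w j) := fun w j => rfl
  have hφ0 : φ 0 = p := by
    ext j; simp [hφj]
  have hmaps : Set.MapsTo φ {w | ∀ j, ‖w j‖ < 1} {z | ∀ j, ‖z j‖ < 1} := fun w hw j => by
    rw [hφj]; exact norm_moebius_lt_one (hp j) (hw j)
  have hφd : DifferentiableOn ℂ φ {w | ∀ j, ‖w j‖ < 1} := by
    refine e.differentiable.comp_differentiableOn (differentiableOn_pi.2 fun j => ?_)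
    have h1 : DifferentiableOn ℂ (fun w : Fin n → ℂ => w j + p j) {w | ∀ j, ‖w j‖ < 1} := by
      fun_prop
    have h2 : DifferentiableOn ℂ (fun w : Fin n → ℂ => 1 + (starRingEnd ℂ) (p j) * w j)
        {w | ∀ j, ‖w j‖ < 1} := by
      fun_prop
    simp only [φ₀, div_eq_mul_inv]
    exact h1.mul (h2.inv fun w hw => one_add_conj_mul_ne_zero (hp j) (hw j))
  have hφ' : HasFDerivAt φ ((e : (Fin n → ℂ) →L[ℂ] EuclideanSpace ℂ (Fin n)).comp
      (ContinuousLinearMap.pi fun j => (1 - (‖p j‖ : ℂ) ^ 2) •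
        (ContinuousLinearMap.proj j : (Fin n → ℂ) →L[ℂ] ℂ))) 0 := by
    refine e.hasFDerivAt.comp (0 : Fin n → ℂ) (hasFDerivAt_pi.2 fun j => ?_)
    exact HasDerivAt.comp_hasFDerivAt (0 : Fin n → ℂ) (hasDerivAt_moebius (p j))
      (ContinuousLinearMap.proj j : (Fin n → ℂ) →L[ℂ] ℂ).hasFDerivAt
  have hfd : HasFDerivAt f (fderiv ℂ f p) (φ 0) := by
    rw [hφ0]
    exact (hf.differentiableAt (hopen.mem_nhds hp)).hasFDerivAt
  have hgd := (hfd.comp (0 : Fin n → ℂ) hφ').fderiv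
  have hgs : ∀ j, fderiv ℂ (f ∘ φ) 0 (Pi.single j 1) =
      (1 - (‖p j‖ : ℂ) ^ 2) • fderiv ℂ f p (EuclideanSpace.single j 1) := by
    intro j
    rw [hgd, ← map_smul]
    simp only [ContinuousLinearMap.comp_apply]
    congr 1
    ext k
    change (1 - (‖p k‖ : ℂ) ^ 2) * (Pi.single j 1 : Fin n → ℂ) k = _
    by_cases hk : k = j
    · subst hk; simp
    · simp [hk]
  have hlin := eq_fderiv_zero (hf.comp hφd hmaps) (fun w hw => hfb _ (hmaps hw))
    (by simp [hφ0, hfp]) (by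
      rw [← heq]
      refine Finset.sum_congr rfl fun j _ => ?_
      rw [hgs, norm_smul, mul_pow]
      congr 2
      rw [← Complex.ofReal_pow, ← Complex.ofReal_one, ← Complex.ofReal_sub, Complex.norm_real,
        Real.norm_of_nonneg (by nlinarith [norm_nonneg (p j), hp j])])
  intro z hz
  have hneg : ∀ j, ‖-p j‖ < 1 := fun j => by simpa using hp j
  -- The preimage of `z` under `φ`.
  let w : Fin n → ℂ := fun j => (z j + -p j) / (1 + (starRingEnd ℂ) (-p j) * z j)
  have hw : ∀ j, ‖w j‖ < 1 := fun j => norm_moebius_lt_one (hneg j) (hz j)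
  have hφw : φ w = z := by
    ext j
    rw [hφj, div_eq_iff (one_add_conj_mul_ne_zero (hp j) (hw j))]
    have h1 := one_add_conj_mul_ne_zero (hneg j) (hz j)
    simp only [w]
    generalize hd : 1 + (starRingEnd ℂ) (-p j) * z j = d at h1
    field_simp
    rw [← hd, map_neg]
    ring
  have h := hlin w hw
  rw [Function.comp_apply, hφw] at h
  rw [h]
  conv_lhs => rw [pi_eq_sum_univ' w]
  rw [map_sum]
  refine Finset.sum_congr rfl fun j _ => ?_
  rw [map_smul, hgs, smul_smul]
  congr 1
  simp only [w, map_neg]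
  ring
end

section
/- Let f : 𝔻^n → 𝔻 be a holomorphic function. Then for every z = (z_1,…,z_n) ∈ 𝔻^n, ∑_{j=1}^n (1 − |z_j|²) |f'_{z_j}(z)| ≤ 1 − |f(z)|². -/
/-!
Fix `z` in the polydisk and unimodular numbers `u j` with `u j * ∂ⱼf(z) = |∂ⱼf(z)|`. The analytic
disk `w ↦ (φ_{z j}(u j * w))ⱼ`, where `φ_a(x) = (x + a) / (1 + conj a * x)` is a disk automorphism,
maps the unit disk into the polydisk, sends `0` to `z`, and has velocity `u j * (1 - |z j|²)` at
`0`. Composing it with `f` and then with `φ_{-f(z)}` gives a self-map of the unit disk fixing `0`,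
whose derivative at `0` is `(∑ j, (1 - |z j|²) |∂ⱼf(z)|) / (1 - |f(z)|²)`. By the Schwarz lemma this
derivative has modulus at most `1`.
-/

open ComplexConjugate

/-- The disk automorphism `x ↦ (x + a) / (1 + conj a * x)`, sending `0` to `a` when `|a| < 1`. -/
noncomputable def diskAut (a x : ℂ) : ℂ := (x + a) / (1 + conj a * x)

lemma one_add_conj_mul_ne_zero_s13 {a x : ℂ} (ha : ‖a‖ < 1) (hx : ‖x‖ < 1) :
    1 + conj a * x ≠ 0 := by
  intro h
  have h1 : conj a * x = -1 := by linear_combination h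
  have h2 : ‖a‖ * ‖x‖ = 1 := by simpa using congrArg norm h1
  nlinarith [norm_nonneg a, norm_nonneg x]

lemma norm_diskAut_lt_one {a x : ℂ} (ha : ‖a‖ < 1) (hx : ‖x‖ < 1) : ‖diskAut a x‖ < 1 := by
  have h0 : 0 < ‖1 + conj a * x‖ := norm_pos_iff.2 (one_add_conj_mul_ne_zero_s13 ha hx)
  rw [diskAut, norm_div, div_lt_one h0]
  have key : ‖1 + conj a * x‖ ^ 2 - ‖x + a‖ ^ 2 = (1 - ‖a‖ ^ 2) * (1 - ‖x‖ ^ 2) := by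
    simp only [← Complex.normSq_eq_norm_sq, Complex.normSq_apply, Complex.add_re, Complex.add_im,
      Complex.mul_re, Complex.mul_im, Complex.conj_re, Complex.conj_im, Complex.one_re,
      Complex.one_im]
    ring
  have hpos : 0 < (1 - ‖a‖ ^ 2) * (1 - ‖x‖ ^ 2) :=
    mul_pos (by nlinarith [norm_nonneg a]) (by nlinarith [norm_nonneg x])
  exact lt_of_pow_lt_pow_left₀ 2 h0.le (by linarith)

lemma hasDerivAt_diskAut {a x : ℂ} (ha : ‖a‖ < 1) (hx : ‖x‖ < 1) :
    HasDerivAt (diskAut a) ((1 - (‖a‖ : ℂ) ^ 2) / (1 + conj a * x) ^ 2) x := by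
  have h1 : HasDerivAt (fun x : ℂ => x + a) 1 x := (hasDerivAt_id x).add_const a
  have h2 : HasDerivAt (fun x : ℂ => 1 + conj a * x) (conj a) x := by
    simpa using ((hasDerivAt_id x).const_mul (conj a)).const_add 1
  refine (h1.div h2 (one_add_conj_mul_ne_zero_s13 ha hx)).congr_deriv ?_
  rw [← Complex.conj_mul']
  ring

/-- The one-variable Schwarz–Pick inequality at the origin: the Schwarz lemma applied to `g` followed
by the disk automorphism moving `g 0` to `0`. -/
lemma norm_deriv_zero_le {g : ℂ → ℂ} (hg : DifferentiableOn ℂ g (Metric.ball 0 1))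
    (hb : ∀ w : ℂ, ‖w‖ < 1 → ‖g w‖ < 1) : ‖deriv g 0‖ ≤ 1 - ‖g 0‖ ^ 2 := by
  have hg0 : ‖g 0‖ < 1 := hb 0 (by simp)
  have hn : ‖-g 0‖ < 1 := by simpa using hg0
  have hpos : 0 < 1 - ‖g 0‖ ^ 2 := by nlinarith [norm_nonneg (g 0)]
  have hfix : diskAut (-g 0) (g 0) = 0 := by simp [diskAut]
  have hd : DifferentiableOn ℂ (fun w => diskAut (-g 0) (g w)) (Metric.ball 0 1) := by
    intro w hw
    have hw' : ‖w‖ < 1 := by simpa using hw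
    exact (hasDerivAt_diskAut hn (hb w hw')).differentiableAt.comp_differentiableWithinAt w
      (hg w hw)
  have hmaps : Set.MapsTo (fun w => diskAut (-g 0) (g w)) (Metric.ball 0 1)
      (Metric.ball (diskAut (-g 0) (g 0)) 1) := by
    intro w hw
    have hw' : ‖w‖ < 1 := by simpa using hw
    simpa [hfix] using norm_diskAut_lt_one hn (hb w hw')
  have hS := Complex.norm_deriv_le_div_of_mapsTo_ball hd
    (hmaps.mono_right Metric.ball_subset_closedBall) one_pos
  have hgd : HasDerivAt g (deriv g 0) 0 :=
    (hg.differentiableAt (Metric.ball_mem_nhds 0 one_pos)).hasDerivAt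
  have hc : HasDerivAt (fun w => diskAut (-g 0) (g w)) _ 0 :=
    (hasDerivAt_diskAut hn hg0).comp 0 hgd
  have hval : 1 + conj (-g 0) * g 0 = ((1 - ‖g 0‖ ^ 2 : ℝ) : ℂ) := by
    push_cast
    rw [← Complex.conj_mul', map_neg]
    ring
  have hval2 : (1 - (‖-g 0‖ : ℂ) ^ 2) = ((1 - ‖g 0‖ ^ 2 : ℝ) : ℂ) := by
    push_cast
    rw [norm_neg]
  rw [hc.deriv, hval, hval2, norm_mul, norm_div, norm_pow, Complex.norm_real, Real.norm_eq_abs,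
    abs_of_pos hpos] at hS
  have h3 : (1 - ‖g 0‖ ^ 2) / (1 - ‖g 0‖ ^ 2) ^ 2 * ‖deriv g 0‖
      = ‖deriv g 0‖ / (1 - ‖g 0‖ ^ 2) := by
    field_simp
  rw [h3, div_one, div_le_one hpos] at hS
  exact hS

lemma exists_unimodular_mul_eq_norm (d : ℂ) : ∃ u : ℂ, ‖u‖ = 1 ∧ u * d = (‖d‖ : ℂ) := by
  by_cases hd : d = 0
  · exact ⟨1, by simp, by simp [hd]⟩
  · have h : (‖d‖ : ℂ) ≠ 0 := by exact_mod_cast norm_ne_zero_iff.2 hd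
    refine ⟨(‖d‖ : ℂ) / d, ?_, div_mul_cancel₀ _ hd⟩
    simp [hd]


/-- **Classical Schwarz–Pick lemma for the polydisk (inequality (1.6)).**
If `f : 𝔻ⁿ → 𝔻` is holomorphic, then
`∑ j (1 - |z_j|²)|f'_{z_j}(z)| ≤ 1 - |f(z)|²` for all `z ∈ 𝔻ⁿ`. -/
theorem schwarz_pick_polydisk_scalar
    (n : ℕ)
    (f : EuclideanSpace ℂ (Fin n) → ℂ)
    (hf : DifferentiableOn ℂ f {z : EuclideanSpace ℂ (Fin n) | ∀ j, ‖z j‖ < 1})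
    (hfb : ∀ z : EuclideanSpace ℂ (Fin n), (∀ j, ‖z j‖ < 1) → ‖f z‖ < 1)
    (z : EuclideanSpace ℂ (Fin n)) (hz : ∀ j, ‖z j‖ < 1) :
    ∑ j : Fin n, (1 - ‖z j‖ ^ 2) * ‖fderiv ℂ f z (EuclideanSpace.single j 1)‖
      ≤ 1 - ‖f z‖ ^ 2 := by
  choose u hu hud using fun j : Fin n =>
    exists_unimodular_mul_eq_norm (fderiv ℂ f z (EuclideanSpace.single j 1))
  set γ : ℂ → EuclideanSpace ℂ (Fin n) :=
    fun w => WithLp.toLp 2 (fun j => diskAut (z j) (u j * w)) with hγ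
  have hunorm : ∀ j (w : ℂ), ‖w‖ < 1 → ‖u j * w‖ < 1 := fun j w hw => by
    rwa [norm_mul, hu, one_mul]
  have hγmem : ∀ w : ℂ, ‖w‖ < 1 → ∀ j, ‖γ w j‖ < 1 := fun w hw j =>
    norm_diskAut_lt_one (hz j) (hunorm j w hw)
  have hγ0 : γ 0 = z := by
    ext j
    simp [hγ, diskAut]
  have hcoord : ∀ j (w : ℂ), ‖w‖ < 1 → HasDerivAt (fun w => diskAut (z j) (u j * w))
      ((1 - (‖z j‖ : ℂ) ^ 2) / (1 + conj (z j) * (u j * w)) ^ 2 * u j) w := by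
    intro j w hw
    have h1 : HasDerivAt (fun w : ℂ => u j * w) (u j) w := by
      simpa using (hasDerivAt_id w).const_mul (u j)
    exact (hasDerivAt_diskAut (hz j) (hunorm j w hw)).comp w h1
  have hγd : ∀ w : ℂ, ‖w‖ < 1 → HasDerivAt γ (WithLp.toLp 2 fun j =>
      (1 - (‖z j‖ : ℂ) ^ 2) / (1 + conj (z j) * (u j * w)) ^ 2 * u j) w := by
    intro w hw
    have h1 := hasDerivAt_pi.2 fun j => hcoord j w hw
    exact ((PiLp.continuousLinearEquiv 2 ℂ (fun _ : Fin n => ℂ)).symm.toContinuousLinearMap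
      |>.hasFDerivAt.comp_hasDerivAt w h1)
  have hopen : IsOpen {z : EuclideanSpace ℂ (Fin n) | ∀ j, ‖z j‖ < 1} := by
    simp only [Set.ofPred_forall]
    exact isOpen_iInter_of_finite fun j => isOpen_lt (by fun_prop) continuous_const
  have hfd : ∀ x : EuclideanSpace ℂ (Fin n), (∀ j, ‖x j‖ < 1) → DifferentiableAt ℂ f x :=
    fun x hx => hf.differentiableAt (hopen.mem_nhds hx)
  have hgd : DifferentiableOn ℂ (fun w => f (γ w)) (Metric.ball 0 1) := by
    intro w hw
    have hw' : ‖w‖ < 1 := by simpa using hw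
    exact ((hfd _ (hγmem w hw')).comp w (hγd w hw').differentiableAt).differentiableWithinAt
  have hmain := norm_deriv_zero_le hgd fun w hw => hfb _ (hγmem w hw)
  have hF : HasFDerivAt f (fderiv ℂ f z) (γ 0) := by
    rw [hγ0]
    exact (hfd z hz).hasFDerivAt
  have hder : HasDerivAt (fun w => f (γ w)) _ 0 :=
    hF.comp_hasDerivAt (0 : ℂ) (hγd 0 (by simp))
  -- The chain rule, expanded in the standard basis; the phases `u j` make every term nonnegative.
  have hsum : fderiv ℂ f z (WithLp.toLp 2 fun j =>
      (1 - (‖z j‖ : ℂ) ^ 2) / (1 + conj (z j) * (u j * 0)) ^ 2 * u j)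
      = ((∑ j : Fin n, (1 - ‖z j‖ ^ 2) * ‖fderiv ℂ f z (EuclideanSpace.single j 1)‖ : ℝ) : ℂ) := by
    have hv : (WithLp.toLp 2 fun j =>
        (1 - (‖z j‖ : ℂ) ^ 2) / (1 + conj (z j) * (u j * 0)) ^ 2 * u j)
        = ∑ j : Fin n, ((1 - (‖z j‖ : ℂ) ^ 2) * u j) •
          (EuclideanSpace.single j 1 : EuclideanSpace ℂ (Fin n)) := by
      ext i
      simp [Pi.single_apply]
    rw [hv, map_sum]
    push_cast
    refine Finset.sum_congr rfl fun j _ => ?_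
    rw [map_smul, smul_eq_mul, mul_assoc, hud]
  rw [hder.deriv, hsum, hγ0, Complex.norm_real] at hmain
  exact (le_abs_self _).trans hmain
end
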